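/- arXiv:2503.10402 — 2 statements merged into one kernel-verified Lean document; each statement's English description precedes it below -/
import Mathlib

section
/- Let f : ℝ → ℝ be twice continuously differentiable, let x* be a simple root of f (i.e. f(x*) = 0 and f'(x*) ≠ 0), and let g : ℝ → ℝ be continuously differentiable with g(0) = 0 and g'(0) ≠ 0. Then the modified Steffensen iteration map v(x) = x − f(x)/h(x), with h(x) = (f(x + g(f(x))) − f(x)) / g(f(x)), has vanishing first-order error at the root: the limit of (v(x) − x*)/(x − x*) as x → x* through points x ≠ x* equals 0. (This is the statement v'(x*) = 0 for the continuous extension of v.) -/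
open Filter Topology

/-!
Expanding `f` to first order at `p`, the quotient `(f (u + w) - f u) / w` is `f' p` up to an error
`o(|u - p| + |w|) / w`. It therefore tends to `f' p` as `u → p` and `w → 0`, provided that
`u - p = O(w)`. In the Steffensen method `u = x` and `w = g (f x)`. Since the root is simple,
`x - p = O(f x)`, and `g' 0 ≠ 0` gives `y = O(g y)`, so `h x → f' p`. Finally, the error ratio of
`x - f x / h x` is `1 - (f x / (x - p)) / h x`, which tends to `1 - f' p / f' p = 0`.
-/

section FirstOrderExpansion

variable {𝕜 E ι : Type*} [NontriviallyNormedField 𝕜] [NormedAddCommGroup E] [NormedSpace 𝕜 E]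

theorem tendsto_dividedDifference {f : 𝕜 → E} {f' : E} {p : 𝕜} {l : Filter ι}
    {u w : ι → 𝕜} (hf : HasDerivAt f f' p) (hu : Tendsto u l (𝓝 p)) (hw : Tendsto w l (𝓝 0))
    (hw_ne : ∀ᶠ i in l, w i ≠ 0) (huw : (fun i => u i - p) =O[l] w) :
    Tendsto (fun i => (w i)⁻¹ • (f (u i + w i) - f (u i))) l (𝓝 f') := by
  have huw_tendsto : Tendsto (fun i => u i + w i) l (𝓝 p) := by simpa using hu.add hw
  have huw_isBigO : (fun i => u i + w i - p) =O[l] w := by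
    simpa only [sub_add_eq_add_sub] using huw.add (Asymptotics.isBigO_refl w l)
  have remainder_at_end := (hf.isLittleO.comp_tendsto huw_tendsto).trans_isBigO huw_isBigO
  have remainder_at_start := (hf.isLittleO.comp_tendsto hu).trans_isBigO huw
  have remainder_isLittleO : (fun i => f (u i + w i) - f (u i) - w i • f') =o[l] w := by
    refine (remainder_at_end.sub remainder_at_start).congr_left fun i => ?_
    simp only [Function.comp_apply]
    module
  have quotient_tendsto :
      Tendsto (fun i => (w i)⁻¹ • (f (u i + w i) - f (u i) - w i • f')) l (𝓝 0) :=
    remainder_isLittleO.tendsto_inv_smul_nhds_zero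
  rw [← tendsto_sub_nhds_zero_iff]
  refine quotient_tendsto.congr' ?_
  filter_upwards [hw_ne] with i hi
  rw [smul_sub, inv_smul_smul₀ hi]

theorem isBigO_sub_of_hasDerivAt_of_eq_zero {f : 𝕜 → E} {f' : E} {p : 𝕜} (hf : HasDerivAt f f' p)
    (hfp : f p = 0) (hf' : f' ≠ 0) : (fun x => x - p) =O[𝓝 p] f := by
  simpa only [prod_pure, Asymptotics.isBigO_map, Function.comp_def, hfp, sub_zero] using
    (hf.isTheta_sub hf').isBigO_symm

end FirstOrderExpansion

section Iteration

variable {𝕜 : Type*} [NontriviallyNormedField 𝕜] {f g h : 𝕜 → 𝕜} {a c p : 𝕜}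

theorem tendsto_quasiNewton_errorRatio (hf : HasDerivAt f a p) (hfp : f p = 0)
    (hh : Tendsto h (𝓝[≠] p) (𝓝 c)) (hc : c ≠ 0) :
    Tendsto (fun x => (x - f x / h x - p) / (x - p)) (𝓝[≠] p) (𝓝 (1 - a / c)) := by
  refine ((hf.tendsto_slope.div hh hc).const_sub 1).congr' ?_
  filter_upwards [self_mem_nhdsWithin] with x hx
  have hxp : x - p ≠ 0 := sub_ne_zero.mpr hx
  rw [Pi.div_apply, slope_def_field, hfp, sub_zero, sub_right_comm, sub_div (x - p),
    div_self hxp, div_right_comm]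

/-- The divided difference `h` that replaces the derivative of `f` in the modified Steffensen
method with auxiliary function `g`. It takes the junk value `0` where `g (f x) = 0`. -/
def steffensenSlope (f g : 𝕜 → 𝕜) (x : 𝕜) : 𝕜 :=
  (f (x + g (f x)) - f x) / g (f x)

/-- The iteration map `v` of the modified Steffensen method: a Newton step with
`steffensenSlope f g x` in place of the derivative. It fixes every `x` at which that slope is `0`,
because of division by zero. -/
def steffensenMap (f g : 𝕜 → 𝕜) (x : 𝕜) : 𝕜 :=
  x - f x / steffensenSlope f g x

theorem tendsto_steffensenSlope (hf : HasDerivAt f a p) (hfp : f p = 0) (ha : a ≠ 0)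
    (hg : Tendsto g (𝓝[≠] 0) (𝓝 0)) (hg_isBigO : (fun y => y) =O[𝓝[≠] 0] g) :
    Tendsto (steffensenSlope f g) (𝓝[≠] p) (𝓝 a) := by
  have hf_tendsto : Tendsto f (𝓝[≠] p) (𝓝[≠] 0) := hfp ▸ hf.tendsto_nhdsNE ha
  have f_isBigO : f =O[𝓝[≠] p] (g ∘ f) := hg_isBigO.comp_tendsto hf_tendsto
  have sub_isBigO : (fun x => x - p) =O[𝓝[≠] p] f :=
    (isBigO_sub_of_hasDerivAt_of_eq_zero hf hfp ha).mono nhdsWithin_le_nhds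
  have step_ne_zero : ∀ᶠ x in 𝓝[≠] p, g (f x) ≠ 0 := by
    filter_upwards [f_isBigO.eq_zero_imp, hf_tendsto self_mem_nhdsWithin] with x hgf hfx
    exact mt hgf hfx
  refine (tendsto_dividedDifference hf (tendsto_id.mono_left nhdsWithin_le_nhds)
    (hg.comp hf_tendsto) step_ne_zero (sub_isBigO.trans f_isBigO)).congr fun x => ?_
  exact (div_eq_inv_mul _ _).symm

theorem modified_steffensen_first_order_error_vanishes_general (hf : HasDerivAt f a p)
    (hfp : f p = 0) (ha : a ≠ 0) (hg : Tendsto g (𝓝[≠] 0) (𝓝 0))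
    (hg_isBigO : (fun y => y) =O[𝓝[≠] 0] g) :
    Tendsto (fun x => (steffensenMap f g x - p) / (x - p)) (𝓝[≠] p) (𝓝 0) := by
  have slope_tendsto := tendsto_steffensenSlope hf hfp ha hg hg_isBigO
  simpa only [steffensenMap, div_self ha, sub_self] using
    tendsto_quasiNewton_errorRatio hf hfp slope_tendsto ha

end Iteration

/-- Near a simple root `x*`, the modified Steffensen iteration map
`v(x) = x - f x / h x` with `h(x) = (f (x + g (f x)) - f x) / g (f x)`
has vanishing first-order error at the root:
`(v x - x*) / (x - x*) → 0` as `x → x*` through points `x ≠ x*`,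
i.e. `v'(x*) = 0` for the continuous extension of `v`. -/
theorem modified_steffensen_first_order_error_vanishes
    (f : ℝ → ℝ) (hf : ContDiff ℝ 2 f) (xs : ℝ)
    (hroot : f xs = 0) (hf' : deriv f xs ≠ 0)
    (g : ℝ → ℝ) (hg : ContDiff ℝ 1 g) (hg0 : g 0 = 0) (hg' : deriv g 0 ≠ 0) :
    Tendsto (fun x : ℝ =>
        ((x - f x / ((f (x + g (f x)) - f x) / g (f x))) - xs) / (x - xs))
      (𝓝[≠] xs) (𝓝 0) := by
  have g_isBigO : (fun y => y) =O[𝓝 0] g := by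
    simpa only [sub_zero] using isBigO_sub_of_hasDerivAt_of_eq_zero
      (hg.differentiable one_ne_zero 0).hasDerivAt hg0 hg'
  exact modified_steffensen_first_order_error_vanishes_general
    (hf.differentiable two_ne_zero xs).hasDerivAt hroot hf'
    ((hg.continuous.tendsto' 0 0 hg0).mono_left nhdsWithin_le_nhds)
    (g_isBigO.mono nhdsWithin_le_nhds)
end

section
/- Let f : ℝ → ℝ be twice continuously differentiable and let x* be a simple root of f (i.e. f(x*) = 0 and f'(x*) ≠ 0). Then the modified Steffensen iteration with g = tanh, i.e. v(x) = x − f(x)·g(f(x)) / (f(x + g(f(x))) − f(x)) with g = tanh, is locally quadratically accurate: there exist constants C > 0 and δ > 0 such that for all x with 0 < |x − x*| < δ the expression v(x) is well defined and |v(x) − x*| ≤ C |x − x*|². -/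
open Filter Topology

/-!
Write `f[u, v]` for the divided difference (`slope f u v`). Since `f xs = 0`, one step from `x` with
increment `t` has the exact error
`(x - xs) * (f[x, x + t] - f[xs, x]) / f[x, x + t]`.
When `f'` is Lipschitz at `xs`, the mean value inequality puts `f[u, v]`, for `u ≠ v` near `xs`,
within `O(|u - xs| + |v - xs|)` of `f' xs`. So if `t = O(x - xs)`, the difference of the two slopes
is `O(x - xs)` while the denominator tends to `f' xs ≠ 0`, and the error is quadratic. The increment
`t = g (f x)` qualifies as soon as `g 0 = 0` and `g' 0 ≠ 0`.
-/

section SecantStep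

open Asymptotics

/-- One step of the secant method for the equation `f = 0`, through the points of abscissas `x` and
`x + t`. Steffensen's iteration and its modifications are the choices `t = g (f x)`. The value is
meaningful only if `f (x + t) ≠ f x`; otherwise it is `x`. -/
def secantStep {K : Type*} [Field K] (f : K → K) (x t : K) : K :=
  x - f x * t / (f (x + t) - f x)

theorem secantStep_sub_root {K : Type*} [Field K] {f : K → K} {r x t : K} (hroot : f r = 0)
    (hx : x ≠ r) (ht : t ≠ 0) (hslope : slope f x (x + t) ≠ 0) :
    secantStep f x t - r =
      (x - r) * (slope f x (x + t) - slope f r x) * (slope f x (x + t))⁻¹ := by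
  have hfx : f x = slope f r x * (x - r) := by
    rw [slope_def_field, hroot, sub_zero, div_mul_cancel₀ _ (sub_ne_zero.2 hx)]
  have hdiff : f (x + t) - f x = slope f x (x + t) * t := by
    rw [slope_def_field, add_sub_cancel_left, div_mul_cancel₀ _ ht]
  rw [secantStep, hdiff, hfx]
  field_simp
  ring

theorem tendsto_sub_nhdsNE_zero {G : Type*} [AddGroup G] [TopologicalSpace G]
    [IsTopologicalAddGroup G] (r : G) : Tendsto (fun x ↦ x - r) (𝓝[≠] r) (𝓝 0) :=
  tendsto_sub_nhds_zero_iff.2 nhdsWithin_le_nhds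

theorem eventually_differentiableAt_of_deriv_ne_zero {𝕜 E : Type*} [NontriviallyNormedField 𝕜]
    [NormedAddCommGroup E] [NormedSpace 𝕜 E] {f : 𝕜 → E} {a : 𝕜}
    (hf' : ContinuousAt (deriv f) a) (ha : deriv f a ≠ 0) :
    ∀ᶠ x in 𝓝 a, DifferentiableAt 𝕜 f x :=
  (hf'.eventually_ne ha).mono fun _ ↦ differentiableAt_of_deriv_ne_zero

variable {𝕜 : Type*} [RCLike 𝕜]

section Slope

variable {E : Type*} [NormedAddCommGroup E] [NormedSpace 𝕜 E] {f : 𝕜 → E} {a : 𝕜}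

theorem norm_slope_sub_le {s : Set 𝕜} {c : E} {C : ℝ} {u v : 𝕜} (hs : Convex ℝ s)
    (hf : ∀ x ∈ s, DifferentiableAt 𝕜 f x) (hC : ∀ x ∈ s, ‖deriv f x - c‖ ≤ C)
    (hu : u ∈ s) (hv : v ∈ s) (huv : u ≠ v) : ‖slope f u v - c‖ ≤ C := by
  have hvu : v - u ≠ 0 := sub_ne_zero.2 huv.symm
  have hderiv : ∀ x ∈ s, HasDerivWithinAt (fun y ↦ f y - y • c) (deriv f x - c) s x := by
    intro x hx
    simpa only [one_smul] using
      ((hf x hx).hasDerivAt.fun_sub ((hasDerivAt_id' x).smul_const c)).hasDerivWithinAt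
  have hmean : ‖(v - u) • (slope f u v - c)‖ ≤ C * ‖v - u‖ := by
    convert hs.norm_image_sub_le_of_norm_hasDerivWithin_le hderiv hC hu hv using 2
    rw [smul_sub, sub_smul_slope, vsub_eq_sub, sub_smul]
    abel
  rw [norm_smul, mul_comm] at hmean
  exact le_of_mul_le_mul_right hmean (norm_pos_iff.2 hvu)

theorem isBigO_slope_sub_deriv (hf : ∀ᶠ x in 𝓝 a, DifferentiableAt 𝕜 f x)
    (hf' : (fun x ↦ deriv f x - deriv f a) =O[𝓝 a] fun x ↦ x - a) :
    (fun p : 𝕜 × 𝕜 ↦ slope f p.1 p.2 - deriv f a) =O[𝓝[(Set.diagonal 𝕜)ᶜ] (a, a)]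
      fun p ↦ p - (a, a) := by
  obtain ⟨C, hC, hbound⟩ := hf'.exists_pos
  obtain ⟨ε, hε, hball⟩ := Metric.eventually_nhds_iff_ball.1 (hf.and hbound.bound)
  refine IsBigO.of_bound C ?_
  filter_upwards [nhdsWithin_le_nhds (Metric.ball_mem_nhds (a, a) hε), self_mem_nhdsWithin]
    with p hp hne
  have hsub : Metric.closedBall a ‖p - (a, a)‖ ⊆ Metric.ball a ε :=
    Metric.closedBall_subset_ball (mem_ball_iff_norm.1 hp)
  refine norm_slope_sub_le (convex_closedBall a ‖p - (a, a)‖) (fun x hx ↦ (hball x (hsub hx)).1)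
    (fun x hx ↦ (hball x (hsub hx)).2.trans ?_) ?_ ?_ hne
  · gcongr
    exact mem_closedBall_iff_norm.1 hx
  · exact mem_closedBall_iff_norm.2 (norm_fst_le (p - (a, a)))
  · exact mem_closedBall_iff_norm.2 (norm_snd_le (p - (a, a)))

theorem isBigO_slope_comp_sub_deriv (hf : ∀ᶠ x in 𝓝 a, DifferentiableAt 𝕜 f x)
    (hf' : (fun x ↦ deriv f x - deriv f a) =O[𝓝 a] fun x ↦ x - a)
    {α F : Type*} [NormedAddCommGroup F] {l : Filter α} {u v : α → 𝕜} {φ : α → F}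
    (hφ : Tendsto φ l (𝓝 0)) (hu : (fun i ↦ u i - a) =O[l] φ) (hv : (fun i ↦ v i - a) =O[l] φ)
    (huv : ∀ᶠ i in l, u i ≠ v i) :
    (fun i ↦ slope f (u i) (v i) - deriv f a) =O[l] φ := by
  have hpair : Tendsto (fun i ↦ (u i, v i)) l (𝓝[(Set.diagonal 𝕜)ᶜ] (a, a)) :=
    tendsto_nhdsWithin_iff.2 ⟨(tendsto_sub_nhds_zero_iff.1 (hu.trans_tendsto hφ)).prodMk_nhds
      (tendsto_sub_nhds_zero_iff.1 (hv.trans_tendsto hφ)), huv⟩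
  exact ((isBigO_slope_sub_deriv hf hf').comp_tendsto hpair).trans (hu.prod_left hv)

end Slope

section Increment

variable {f t : 𝕜 → 𝕜} {r : 𝕜}

theorem isBigO_slope_add_sub_deriv (hf : ∀ᶠ x in 𝓝 r, DifferentiableAt 𝕜 f x)
    (hf' : (fun x ↦ deriv f x - deriv f r) =O[𝓝 r] fun x ↦ x - r)
    (ht : t =O[𝓝[≠] r] fun x ↦ x - r) (ht₀ : ∀ᶠ x in 𝓝[≠] r, t x ≠ 0) :
    (fun x ↦ slope f x (x + t x) - deriv f r) =O[𝓝[≠] r] fun x ↦ x - r := by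
  refine isBigO_slope_comp_sub_deriv hf hf' (tendsto_sub_nhdsNE_zero r) (isBigO_refl _ _) ?_ ?_
  · simpa only [add_sub_right_comm] using (isBigO_refl (fun x ↦ x - r) _).add ht
  · simpa using ht₀

theorem tendsto_slope_add (hf : ∀ᶠ x in 𝓝 r, DifferentiableAt 𝕜 f x)
    (hf' : (fun x ↦ deriv f x - deriv f r) =O[𝓝 r] fun x ↦ x - r)
    (ht : t =O[𝓝[≠] r] fun x ↦ x - r) (ht₀ : ∀ᶠ x in 𝓝[≠] r, t x ≠ 0) :
    Tendsto (fun x ↦ slope f x (x + t x)) (𝓝[≠] r) (𝓝 (deriv f r)) :=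
  tendsto_sub_nhds_zero_iff.1 <|
    (isBigO_slope_add_sub_deriv hf hf' ht ht₀).trans_tendsto (tendsto_sub_nhdsNE_zero r)

theorem isBigO_secantStep_sub_root (hf : ∀ᶠ x in 𝓝 r, DifferentiableAt 𝕜 f x)
    (hf' : (fun x ↦ deriv f x - deriv f r) =O[𝓝 r] fun x ↦ x - r)
    (hroot : f r = 0) (hsimple : deriv f r ≠ 0)
    (ht : t =O[𝓝[≠] r] fun x ↦ x - r) (ht₀ : ∀ᶠ x in 𝓝[≠] r, t x ≠ 0) :
    (fun x ↦ secantStep f x (t x) - r) =O[𝓝[≠] r] fun x ↦ (x - r) ^ 2 := by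
  have hlim := tendsto_slope_add hf hf' ht ht₀
  have herror : (fun x ↦ secantStep f x (t x) - r) =ᶠ[𝓝[≠] r] fun x ↦
      (x - r) * (slope f x (x + t x) - slope f r x) * (slope f x (x + t x))⁻¹ := by
    filter_upwards [self_mem_nhdsWithin, ht₀, hlim.eventually_ne hsimple] with x hx htx hslope
    exact secantStep_sub_root hroot hx htx hslope
  have hroot_slope : (fun x ↦ slope f r x - deriv f r) =O[𝓝[≠] r] fun x ↦ x - r := by
    refine isBigO_slope_comp_sub_deriv hf hf' (tendsto_sub_nhdsNE_zero r) ?_ (isBigO_refl _ _) ?_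
    · simpa only [sub_self] using isBigO_zero (fun x ↦ x - r) _
    · exact eventually_mem_nhdsWithin.mono fun x hx ↦ Ne.symm hx
  have hslopes : (fun x ↦ slope f x (x + t x) - slope f r x) =O[𝓝[≠] r] fun x ↦ x - r := by
    simpa only [sub_sub_sub_cancel_right] using
      (isBigO_slope_add_sub_deriv hf hf' ht ht₀).sub hroot_slope
  have hinv : (fun x ↦ (slope f x (x + t x))⁻¹) =O[𝓝[≠] r] fun _ ↦ (1 : 𝕜) :=
    (hlim.inv₀ hsimple).isBigO_one 𝕜
  simpa only [mul_one, sq] using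
    herror.trans_isBigO (((isBigO_refl (fun x ↦ x - r) _).mul hslopes).mul hinv)

end Increment

theorem tanh_steffensen_locally_quadratic_general {f g : 𝕜 → 𝕜} {xs : 𝕜}
    (hf : (fun x ↦ deriv f x - deriv f xs) =O[𝓝 xs] fun x ↦ x - xs)
    (hroot : f xs = 0) (hf' : deriv f xs ≠ 0) (hg : g 0 = 0) (hg' : deriv g 0 ≠ 0) :
    ∃ C > 0, ∃ δ > 0, ∀ x : 𝕜, 0 < ‖x - xs‖ → ‖x - xs‖ < δ →
      g (f x) ≠ 0 ∧
      f (x + g (f x)) - f x ≠ 0 ∧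
      ‖(x - f x * g (f x) / (f (x + g (f x)) - f x)) - xs‖ ≤ C * ‖x - xs‖ ^ 2 := by
  have hcont : ContinuousAt (deriv f) xs :=
    tendsto_sub_nhds_zero_iff.1 (hf.trans_tendsto (tendsto_sub_nhds_zero_iff.2 tendsto_id))
  have hdiff := eventually_differentiableAt_of_deriv_ne_zero hcont hf'
  have hgf : HasDerivAt (fun x ↦ g (f x)) (deriv g 0 * deriv f xs) xs :=
    (differentiableAt_of_deriv_ne_zero hg').hasDerivAt.comp_of_eq xs
      (differentiableAt_of_deriv_ne_zero hf').hasDerivAt hroot.symm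
  have ht : (fun x ↦ g (f x)) =O[𝓝[≠] xs] fun x ↦ x - xs := by
    simpa only [hroot, hg, sub_zero] using hgf.isBigO_sub.mono nhdsWithin_le_nhds
  have ht₀ : ∀ᶠ x in 𝓝[≠] xs, g (f x) ≠ 0 := hgf.eventually_ne (mul_ne_zero hg' hf')
  have hslope := (tendsto_slope_add hdiff hf ht ht₀).eventually_ne hf'
  obtain ⟨C, hC, herror⟩ := (isBigO_secantStep_sub_root hdiff hf hroot hf' ht ht₀).exists_pos
  obtain ⟨δ, hδ, hball⟩ := Metric.eventually_nhds_iff.1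
    (eventually_nhdsWithin_iff.1 (ht₀.and (hslope.and herror.bound)))
  refine ⟨C, hC, δ, hδ, fun x hx hxδ ↦ ?_⟩
  obtain ⟨hgx, hsx, hex⟩ := hball (dist_eq_norm x xs ▸ hxδ) (sub_ne_zero.1 (norm_pos_iff.1 hx))
  refine ⟨hgx, fun h ↦ hsx ?_, by simpa only [secantStep, norm_pow] using hex⟩
  rw [slope_def_field, h, zero_div]

end SecantStep

theorem hasDerivAt_real_tanh (x : ℝ) : HasDerivAt Real.tanh (1 / Real.cosh x ^ 2) x := by
  have hquot := (Real.hasDerivAt_sinh x).div (Real.hasDerivAt_cosh x) (Real.cosh_pos x).ne'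
  rw [← sq, ← sq, Real.cosh_sq_sub_sinh_sq] at hquot
  exact hquot.congr_of_eventuallyEq (.of_forall Real.tanh_eq_sinh_div_cosh)

/-- The modified Steffensen iteration with auxiliary function `g = tanh`,
`v(x) = x - f x * tanh (f x) / (f (x + tanh (f x)) - f x)`, is locally
quadratically accurate near a simple root `x*`: on a punctured ball around
`x*` it is well defined and `|v x - x*| ≤ C |x - x*|²`. -/
theorem tanh_steffensen_locally_quadratic
    (f : ℝ → ℝ) (hf : ContDiff ℝ 2 f) (xs : ℝ)
    (hroot : f xs = 0) (hf' : deriv f xs ≠ 0) :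
    ∃ C > 0, ∃ δ > 0, ∀ x : ℝ, 0 < |x - xs| → |x - xs| < δ →
      Real.tanh (f x) ≠ 0 ∧
      f (x + Real.tanh (f x)) - f x ≠ 0 ∧
      |(x - f x * Real.tanh (f x) / (f (x + Real.tanh (f x)) - f x)) - xs| ≤
        C * |x - xs| ^ 2 :=
  tanh_steffensen_locally_quadratic_general (hf.differentiable_deriv_two xs).isBigO_sub
    hroot hf' Real.tanh_zero (by simp [(hasDerivAt_real_tanh 0).deriv])
end
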